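/- arXiv:1802.02554 — 4 statements merged into one kernel-verified Lean document; each statement's English description precedes it below -/
import Mathlib

section
/- Let (x_k) be a bounded sequence in ℝⁿ, let S ⊆ ℝⁿ be nonempty, and let D ⊆ S be a countable set that is dense in S. Suppose that every cluster point of (x_k) belongs to S, and that for every s ∈ D the real sequence (‖x_k − s‖)_k converges. Then (x_k) converges to some point of S. -/
open Filter Topology

/-!
Let `p` be a cluster point of `x`. For `s ∈ D` the limit of `dist (x k) s` can only be `dist p s`,
and density allows a choice of `s ∈ D` arbitrarily close to `p`. Then `x k` is eventually as close
to `s` as `p` is, up to an arbitrarily small error, hence close to `p`. So a single cluster point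
forces convergence. One exists because the convergence of `dist (x k) s` for a single `s` already
confines a tail of `x` to a closed ball, which is compact.
-/

section ClusterPoints

variable {ι X : Type*} {l : Filter ι} {u : ι → X}

theorem eq_of_mapClusterPt_of_tendsto [TopologicalSpace X] [T2Space X] {a b : X}
    (ha : MapClusterPt a l u) (hb : Tendsto u l (𝓝 b)) : a = b :=
  eq_of_nhds_neBot (ha.clusterPt.mono hb)

variable [PseudoMetricSpace X]

theorem tendsto_dist_of_mapClusterPt {p s : X} (hp : MapClusterPt p l u)
    (hs : ∃ c : ℝ, Tendsto (fun i => dist (u i) s) l (𝓝 c)) :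
    Tendsto (fun i => dist (u i) s) l (𝓝 (dist p s)) := by
  obtain ⟨c, hc⟩ := hs
  have hps : MapClusterPt (dist p s) l fun i => dist (u i) s :=
    hp.continuousAt_comp (f := fun y => dist y s) (by fun_prop)
  rwa [eq_of_mapClusterPt_of_tendsto hps hc]

theorem tendsto_of_mapClusterPt_of_mem_closure {D : Set X} {p : X} (hp : MapClusterPt p l u)
    (hpD : p ∈ closure D)
    (hconv : ∀ s ∈ D, ∃ c : ℝ, Tendsto (fun i => dist (u i) s) l (𝓝 c)) :
    Tendsto u l (𝓝 p) := by
  refine Metric.tendsto_nhds.mpr fun ε hε => ?_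
  obtain ⟨s, hsD, hps⟩ := Metric.mem_closure_iff.mp hpD (ε / 2) (half_pos hε)
  have hus : ∀ᶠ i in l, dist (u i) s < ε / 2 :=
    (tendsto_dist_of_mapClusterPt hp (hconv s hsD)).eventually_lt_const hps
  filter_upwards [hus] with i hi
  calc
    dist (u i) p ≤ dist (u i) s + dist p s := dist_triangle_right _ _ _
    _ < ε / 2 + ε / 2 := add_lt_add hi hps
    _ = ε := add_halves ε

theorem exists_mapClusterPt_of_tendsto_dist [ProperSpace X] [l.NeBot] {s : X} {c : ℝ}
    (hc : Tendsto (fun i => dist (u i) s) l (𝓝 c)) : ∃ p, MapClusterPt p l u := by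
  have hball : ∀ᶠ i in l, u i ∈ Metric.closedBall s (c + 1) :=
    hc.eventually_le_const (lt_add_one c)
  obtain ⟨p, -, hp⟩ :=
    (isCompact_closedBall s (c + 1)).exists_mapClusterPt_of_frequently hball.frequently
  exact ⟨p, hp⟩

theorem bounded_seq_converges_of_dist_to_dense_subset_converges_general [ProperSpace X] [l.NeBot]
    {S D : Set X} (hS : S.Nonempty) (hdense : S ⊆ closure D)
    (hcluster : ∀ p, MapClusterPt p l u → p ∈ S)
    (hconv : ∀ s ∈ D, ∃ c : ℝ, Tendsto (fun i => dist (u i) s) l (𝓝 c)) :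
    ∃ p ∈ S, Tendsto u l (𝓝 p) := by
  obtain ⟨s, hs⟩ : D.Nonempty := closure_nonempty_iff.mp (hS.mono hdense)
  obtain ⟨c, hc⟩ := hconv s hs
  obtain ⟨p, hp⟩ := exists_mapClusterPt_of_tendsto_dist hc
  have hpS : p ∈ S := hcluster p hp
  exact ⟨p, hpS, tendsto_of_mapClusterPt_of_mem_closure hp (hdense hpS) hconv⟩

end ClusterPoints

/-- A bounded sequence in `ℝⁿ` all of whose cluster points lie in a set `S`, and such
that `‖x_k - s‖` converges for every `s` in a countable dense subset `D` of `S`,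
converges to a point of `S`. -/
theorem bounded_seq_converges_of_dist_to_dense_subset_converges
    {n : ℕ} (x : ℕ → EuclideanSpace ℝ (Fin n))
    (S D : Set (EuclideanSpace ℝ (Fin n)))
    (hbdd : Bornology.IsBounded (Set.range x))
    (hS : S.Nonempty)
    (hDS : D ⊆ S) (hDcount : D.Countable) (hdense : S ⊆ closure D)
    (hcluster : ∀ p, MapClusterPt p atTop x → p ∈ S)
    (hconv : ∀ s ∈ D, ∃ c : ℝ, Tendsto (fun k => ‖x k - s‖) atTop (𝓝 c)) :
    ∃ p ∈ S, Tendsto x atTop (𝓝 p) :=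
  bounded_seq_converges_of_dist_to_dense_subset_converges_general hS hdense hcluster
    (by simpa only [dist_eq_norm] using hconv)
end

section
/- (Supermartingale convergence / Robbins–Siegmund.) Let (Ω, 𝔉, P) be a probability space with a filtration (𝔉_k)_{k≥0}, and let (Y_k), (Z_k), (W_k) be sequences of nonnegative integrable random variables such that Y_k, Z_k, W_k are 𝔉_k-measurable for each k, E[Y_{k+1} | 𝔉_k] ≤ Y_k − Z_k + W_k almost surely for every k, and Σ_k W_k < ∞ almost surely. Then Σ_k Z_k < ∞ almost surely, and (Y_k) converges almost surely to a nonnegative random variable. -/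
open MeasureTheory Filter Topology

/-!
Put `V n = 1 + Y n`. Since `V n ≥ 1`, the additive error is absorbed into a growth rate `W n`, that
is, `E[V (n + 1) | ℱ n] ≤ (1 + W n) * V n - Z n`; a growth rate `B n` already present in the bound
for `Y` is simply added to it. Discount by `D n = 1 / ∏_{i<n} (1 + W i)`: as `D (n + 1)` is
`ℱ n`-measurable and `D (n + 1) * (1 + W n) = D n`, the process
`D n * V n + ∑_{i<n} D (i + 1) * Z i` is a nonnegative supermartingale, hence converges almost
surely. Where `∑ W k` is finite, `1 / D n` converges, so the discounting can be undone along each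
path. Integrability of the discounted terms comes from `D (n + 1) * Z n ≤ D n * V n ≤ V n`.
-/

section Discount

/-- The discount factor `1 / ∏_{i<n} (1 + w i)` that compensates the growth rates `w` over the first
`n` periods. The rate `w n` first enters at time `n + 1`, so a discount factor with adapted rates is
a predictable process. -/
noncomputable def discount (w : ℕ → ℝ) (n : ℕ) : ℝ :=
  (∏ i ∈ Finset.range n, (1 + w i))⁻¹

/-- The discounted value of `v` at time `n` plus all earlier payments `z i`, each of which is
discounted as if made at time `i + 1`. -/
noncomputable def discountedTotal (v z w : ℕ → ℝ) (n : ℕ) : ℝ :=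
  discount w n * v n + ∑ i ∈ Finset.range n, discount w (i + 1) * z i

variable {v z w : ℕ → ℝ}

lemma discount_pos (hw : ∀ i, 0 ≤ w i) (n : ℕ) : 0 < discount w n :=
  inv_pos.2 (Finset.prod_pos fun i _ => add_pos_of_pos_of_nonneg one_pos (hw i))

lemma discount_le_one (hw : ∀ i, 0 ≤ w i) (n : ℕ) : discount w n ≤ 1 :=
  inv_le_one_of_one_le₀ (Finset.one_le_prod fun i _ => le_add_of_nonneg_right (hw i))

lemma discount_succ_mul_one_add {n : ℕ} (hw : 1 + w n ≠ 0) :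
    discount w (n + 1) * (1 + w n) = discount w n := by
  rw [discount, discount, Finset.prod_range_succ, mul_inv, inv_mul_cancel_right₀ hw]

lemma tendsto_inv_discount (hw : Summable w) :
    Tendsto (fun n => (discount w n)⁻¹) atTop (𝓝 (∏' i, (1 + w i))) := by
  simpa only [discount, inv_inv] using
    (Real.multipliable_one_add_of_summable hw).tendsto_prod_tprod_nat

lemma discountedTotal_nonneg (hv : ∀ n, 0 ≤ v n) (hz : ∀ n, 0 ≤ z n) (hw : ∀ n, 0 ≤ w n) (n : ℕ) :
    0 ≤ discountedTotal v z w n :=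
  add_nonneg (mul_nonneg (discount_pos hw n).le (hv n))
    (Finset.sum_nonneg fun i _ => mul_nonneg (discount_pos hw (i + 1)).le (hz i))

lemma summable_of_summable_discount_succ_mul (hz : ∀ n, 0 ≤ z n) (hw : ∀ n, 0 ≤ w n)
    (hw_sum : Summable w) (h : Summable fun n => discount w (n + 1) * z n) : Summable z := by
  obtain ⟨B, hB⟩ := (tendsto_inv_discount hw_sum).bddAbove_range
  refine (h.mul_left B).of_nonneg_of_le hz fun n => ?_
  have hD := discount_pos hw (n + 1)
  calc z n = (discount w (n + 1))⁻¹ * (discount w (n + 1) * z n) :=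
        (inv_mul_cancel_left₀ hD.ne' _).symm
    _ ≤ B * (discount w (n + 1) * z n) :=
        mul_le_mul_of_nonneg_right (hB ⟨n + 1, rfl⟩) (mul_nonneg hD.le (hz n))

lemma summable_and_tendsto_of_tendsto_discountedTotal (hv : ∀ n, 0 ≤ v n) (hz : ∀ n, 0 ≤ z n)
    (hw : ∀ n, 0 ≤ w n) (hw_sum : Summable w) {c : ℝ}
    (hc : Tendsto (discountedTotal v z w) atTop (𝓝 c)) :
    Summable z ∧ ∃ l, Tendsto v atTop (𝓝 l) := by
  have hD := discount_pos hw
  have hDz : Summable fun n => discount w (n + 1) * z n := by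
    obtain ⟨B, hB⟩ := hc.bddAbove_range
    exact summable_of_sum_range_le (fun n => mul_nonneg (hD (n + 1)).le (hz n)) fun n =>
      (le_add_of_nonneg_left (mul_nonneg (hD n).le (hv n))).trans (hB ⟨n, rfl⟩)
  have hDv : Tendsto (fun n => discount w n * v n) atTop
      (𝓝 (c - ∑' n, discount w (n + 1) * z n)) :=
    (hc.sub hDz.tendsto_sum_tsum_nat).congr fun n => add_sub_cancel_right _ _
  exact ⟨summable_of_summable_discount_succ_mul hz hw hw_sum hDz, _,
    ((tendsto_inv_discount hw_sum).mul hDv).congr fun n => inv_mul_cancel_left₀ (hD n).ne' _⟩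

end Discount

section AlmostSupermartingale

variable {Ω : Type*} {m0 : MeasurableSpace Ω} {μ : Measure Ω} {ℱ : Filtration ℕ m0}
  {V Z W : ℕ → Ω → ℝ}

lemma ae_exists_tendsto_of_nonneg_supermartingale [IsFiniteMeasure μ] {X : ℕ → Ω → ℝ}
    (hX : Supermartingale X ℱ μ) (hX_nonneg : ∀ n, 0 ≤ᵐ[μ] X n) :
    ∀ᵐ ω ∂μ, ∃ c, Tendsto (fun n => X n ω) atTop (𝓝 c) := by
  have hbdd (n : ℕ) : eLpNorm ((-X) n) 1 μ ≤ (∫ ω, X 0 ω ∂μ).toNNReal :=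
    calc eLpNorm ((-X) n) 1 μ = ENNReal.ofReal (∫ ω, ‖X n ω‖ ∂μ) := by
          rw [Pi.neg_apply, eLpNorm_neg, eLpNorm_one_eq_lintegral_enorm,
            ofReal_integral_norm_eq_lintegral_enorm (hX.integrable n)]
      _ = ENNReal.ofReal (∫ ω, X n ω ∂μ) := by
          rw [integral_congr_ae ((hX_nonneg n).mono fun ω => Real.norm_of_nonneg)]
      _ ≤ ENNReal.ofReal (∫ ω, X 0 ω ∂μ) := ENNReal.ofReal_le_ofReal <| by
          simpa only [setIntegral_univ] using hX.setIntegral_le n.zero_le MeasurableSet.univ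
  filter_upwards [hX.neg.exists_ae_tendsto_of_bdd hbdd] with ω ⟨c, hc⟩
  exact ⟨-c, by simpa only [Pi.neg_apply, neg_neg] using hc.neg⟩

lemma stronglyMeasurable_discount {m : MeasurableSpace Ω} {n : ℕ}
    (hW : ∀ i < n, StronglyMeasurable[m] (W i)) :
    StronglyMeasurable[m] fun ω => discount (W · ω) n :=
  (Finset.measurable_fun_prod _ fun i hi =>
    (hW i (Finset.mem_range.1 hi)).measurable.const_add 1).inv.stronglyMeasurable

lemma stronglyMeasurable_discount_succ (hW : StronglyAdapted ℱ W) (n : ℕ) :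
    StronglyMeasurable[ℱ n] fun ω => discount (W · ω) (n + 1) :=
  stronglyMeasurable_discount fun i hi => (hW i).mono (ℱ.mono (Nat.le_of_lt_succ hi))

lemma stronglyMeasurable_sum_discount_mul (hZ : StronglyAdapted ℱ Z) (hW : StronglyAdapted ℱ W)
    {k n : ℕ} (hkn : k ≤ n + 1) :
    StronglyMeasurable[ℱ n] fun ω => ∑ i ∈ Finset.range k, discount (W · ω) (i + 1) * Z i ω :=
  Finset.stronglyMeasurable_fun_sum _ fun i hi =>
    ((stronglyMeasurable_discount_succ hW i).mul (hZ i)).mono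
      (ℱ.mono (Nat.le_of_lt_succ ((Finset.mem_range.1 hi).trans_le hkn)))

lemma stronglyAdapted_discountedTotal (hV : StronglyAdapted ℱ V) (hZ : StronglyAdapted ℱ Z)
    (hW : StronglyAdapted ℱ W) :
    StronglyAdapted ℱ fun n ω => discountedTotal (V · ω) (Z · ω) (W · ω) n := fun n =>
  ((stronglyMeasurable_discount fun i hi => (hW i).mono (ℱ.mono hi.le)).mul (hV n)).add
    (stronglyMeasurable_sum_discount_mul hZ hW n.le_succ)

lemma ae_norm_discount_le_one (hW_nonneg : ∀ n, 0 ≤ᵐ[μ] W n) (n : ℕ) :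
    ∀ᵐ ω ∂μ, ‖discount (W · ω) n‖ ≤ 1 := by
  filter_upwards [ae_all_iff.2 hW_nonneg] with ω hW
  rw [Real.norm_of_nonneg (discount_pos hW n).le]
  exact discount_le_one hW n

lemma integrable_discount_mul {f : Ω → ℝ} (hf : Integrable f μ) (hW : StronglyAdapted ℱ W)
    (hW_nonneg : ∀ n, 0 ≤ᵐ[μ] W n) (n : ℕ) :
    Integrable (fun ω => discount (W · ω) n * f ω) μ :=
  hf.bdd_mul (stronglyMeasurable_discount fun i _ =>
    (hW i).mono (ℱ.le i)).aestronglyMeasurable (ae_norm_discount_le_one hW_nonneg n)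

lemma integrable_discount_succ_mul {n : ℕ} (hV_int : Integrable (V n) μ)
    (hV_nonneg : 0 ≤ᵐ[μ] V (n + 1)) (hZ : StronglyMeasurable[ℱ n] (Z n)) (hZ_nonneg : 0 ≤ᵐ[μ] Z n)
    (hW : StronglyAdapted ℱ W) (hW_nonneg : ∀ i, 0 ≤ᵐ[μ] W i)
    (hsuper : μ[V (n + 1) | ℱ n] ≤ᵐ[μ] fun ω => (1 + W n ω) * V n ω - Z n ω) :
    Integrable (fun ω => discount (W · ω) (n + 1) * Z n ω) μ := by
  refine (integrable_discount_mul hV_int hW hW_nonneg n).mono'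
    (((stronglyMeasurable_discount_succ hW n).mul hZ).mono (ℱ.le n)).aestronglyMeasurable ?_
  filter_upwards [condExp_nonneg (m := ℱ n) hV_nonneg, hsuper, hZ_nonneg,
    ae_all_iff.2 hW_nonneg] with ω hcond_nonneg hcond_le hZω hWω
  have hD := (discount_pos hWω (n + 1)).le
  calc ‖discount (W · ω) (n + 1) * Z n ω‖ = discount (W · ω) (n + 1) * Z n ω :=
        Real.norm_of_nonneg (mul_nonneg hD hZω)
    _ ≤ discount (W · ω) (n + 1) * ((1 + W n ω) * V n ω) :=
        mul_le_mul_of_nonneg_left (sub_nonneg.1 (hcond_nonneg.trans hcond_le)) hD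
    _ = discount (W · ω) n * V n ω := by
        rw [← mul_assoc, discount_succ_mul_one_add (add_pos_of_pos_of_nonneg one_pos (hWω n)).ne']

lemma condExp_discountedTotal_succ [IsFiniteMeasure μ] {n : ℕ} (hV_int : Integrable (V (n + 1)) μ)
    (hZ : StronglyAdapted ℱ Z) (hW : StronglyAdapted ℱ W) (hW_nonneg : ∀ i, 0 ≤ᵐ[μ] W i)
    (hDZ_int : ∀ i, Integrable (fun ω => discount (W · ω) (i + 1) * Z i ω) μ) :
    μ[fun ω => discountedTotal (V · ω) (Z · ω) (W · ω) (n + 1) | ℱ n] =ᵐ[μ] fun ω =>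
      discount (W · ω) (n + 1) * (μ[V (n + 1) | ℱ n]) ω +
        ∑ i ∈ Finset.range (n + 1), discount (W · ω) (i + 1) * Z i ω := by
  have hsum_int := integrable_finsetSum (Finset.range (n + 1)) fun i _ => hDZ_int i
  have hadd := condExp_add (integrable_discount_mul hV_int hW hW_nonneg (n + 1)) hsum_int (ℱ n)
  rw [condExp_of_stronglyMeasurable (ℱ.le n) (stronglyMeasurable_sum_discount_mul hZ hW le_rfl)
    hsum_int] at hadd
  have hpull := condExp_stronglyMeasurable_mul_of_bound (ℱ.le n)
    (stronglyMeasurable_discount_succ hW n) hV_int 1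
    (ae_norm_discount_le_one hW_nonneg (n + 1))
  exact hadd.trans (hpull.add .rfl)

lemma supermartingale_discountedTotal [IsFiniteMeasure μ] (hV : StronglyAdapted ℱ V)
    (hV_int : ∀ n, Integrable (V n) μ) (hV_nonneg : ∀ n, 0 ≤ᵐ[μ] V n)
    (hZ : StronglyAdapted ℱ Z) (hZ_nonneg : ∀ n, 0 ≤ᵐ[μ] Z n)
    (hW : StronglyAdapted ℱ W) (hW_nonneg : ∀ n, 0 ≤ᵐ[μ] W n)
    (hsuper : ∀ n, μ[V (n + 1) | ℱ n] ≤ᵐ[μ] fun ω => (1 + W n ω) * V n ω - Z n ω) :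
    Supermartingale (fun n ω => discountedTotal (V · ω) (Z · ω) (W · ω) n) ℱ μ := by
  have hDZ_int (n : ℕ) := integrable_discount_succ_mul (hV_int n) (hV_nonneg (n + 1)) (hZ n)
    (hZ_nonneg n) hW hW_nonneg (hsuper n)
  refine supermartingale_nat (stronglyAdapted_discountedTotal hV hZ hW)
    (fun n => (integrable_discount_mul (hV_int n) hW hW_nonneg n).add
      (integrable_finsetSum _ fun i _ => hDZ_int i)) fun n => ?_
  filter_upwards [condExp_discountedTotal_succ (hV_int (n + 1)) hZ hW hW_nonneg hDZ_int, hsuper n,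
    ae_all_iff.2 hW_nonneg] with ω hcond hle hWω
  have hD := discount_succ_mul_one_add (w := (W · ω)) (add_pos_of_pos_of_nonneg one_pos (hWω n)).ne'
  rw [hcond, discountedTotal, Finset.sum_range_succ, ← hD]
  -- The two discounted copies of `Z n` cancel.
  linear_combination mul_le_mul_of_nonneg_left hle (discount_pos hWω (n + 1)).le

lemma ae_summable_and_tendsto_of_condExp_le_one_add_mul_sub [IsFiniteMeasure μ]
    (hV : StronglyAdapted ℱ V) (hV_int : ∀ n, Integrable (V n) μ) (hV_nonneg : ∀ n, 0 ≤ᵐ[μ] V n)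
    (hZ : StronglyAdapted ℱ Z) (hZ_nonneg : ∀ n, 0 ≤ᵐ[μ] Z n)
    (hW : StronglyAdapted ℱ W) (hW_nonneg : ∀ n, 0 ≤ᵐ[μ] W n)
    (hsuper : ∀ n, μ[V (n + 1) | ℱ n] ≤ᵐ[μ] fun ω => (1 + W n ω) * V n ω - Z n ω)
    (hW_sum : ∀ᵐ ω ∂μ, Summable fun n => W n ω) :
    ∀ᵐ ω ∂μ, Summable (fun n => Z n ω) ∧ ∃ l, Tendsto (fun n => V n ω) atTop (𝓝 l) := by
  have hnonneg : ∀ᵐ ω ∂μ, ∀ n, 0 ≤ V n ω ∧ 0 ≤ Z n ω ∧ 0 ≤ W n ω :=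
    ae_all_iff.2 fun n => (hV_nonneg n).and ((hZ_nonneg n).and (hW_nonneg n))
  have htendsto := ae_exists_tendsto_of_nonneg_supermartingale
    (supermartingale_discountedTotal hV hV_int hV_nonneg hZ hZ_nonneg hW hW_nonneg hsuper)
    fun n => hnonneg.mono fun ω h =>
      discountedTotal_nonneg (fun k => (h k).1) (fun k => (h k).2.1) (fun k => (h k).2.2) n
  filter_upwards [htendsto, hnonneg, hW_sum] with ω ⟨c, hc⟩ h hw
  exact summable_and_tendsto_of_tendsto_discountedTotal (fun k => (h k).1) (fun k => (h k).2.1)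
    (fun k => (h k).2.2) hw hc

theorem robbins_siegmund_supermartingale_convergence_general [IsFiniteMeasure μ]
    {Y B : ℕ → Ω → ℝ} (hY : StronglyAdapted ℱ Y) (hY_int : ∀ n, Integrable (Y n) μ)
    (hY_nonneg : ∀ n, 0 ≤ᵐ[μ] Y n)
    (hZ : StronglyAdapted ℱ Z) (hZ_nonneg : ∀ n, 0 ≤ᵐ[μ] Z n)
    (hB : StronglyAdapted ℱ B) (hB_nonneg : ∀ n, 0 ≤ᵐ[μ] B n)
    (hW : StronglyAdapted ℱ W) (hW_nonneg : ∀ n, 0 ≤ᵐ[μ] W n)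
    (hsuper : ∀ n, μ[Y (n + 1) | ℱ n] ≤ᵐ[μ] fun ω => (1 + B n ω) * Y n ω - Z n ω + W n ω)
    (hB_sum : ∀ᵐ ω ∂μ, Summable fun n => B n ω) (hW_sum : ∀ᵐ ω ∂μ, Summable fun n => W n ω) :
    ∀ᵐ ω ∂μ, Summable (fun n => Z n ω) ∧
      ∃ c : ℝ, 0 ≤ c ∧ Tendsto (fun n => Y n ω) atTop (𝓝 c) := by
  have hsuper' (n : ℕ) : μ[1 + Y (n + 1) | ℱ n] ≤ᵐ[μ]
      fun ω => (1 + (B + W) n ω) * (1 + Y n) ω - Z n ω := by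
    have hadd := condExp_add (integrable_const (1 : ℝ)) (hY_int (n + 1)) (ℱ n)
    rw [condExp_const (ℱ.le n)] at hadd
    filter_upwards [hadd, hsuper n, hY_nonneg n, hB_nonneg n, hW_nonneg n]
      with ω hadd hle (hYω : 0 ≤ Y n ω) (hBω : 0 ≤ B n ω) (hWω : 0 ≤ W n ω)
    refine hadd.trans_le ?_
    simp only [Pi.add_apply, Pi.one_apply]
    linear_combination hle + hBω + mul_nonneg hWω hYω
  have hBW_nonneg (n : ℕ) : 0 ≤ᵐ[μ] (B + W) n := by
    filter_upwards [hB_nonneg n, hW_nonneg n] with ω using add_nonneg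
  have hBW_sum : ∀ᵐ ω ∂μ, Summable fun n => (B + W) n ω := by
    filter_upwards [hB_sum, hW_sum] with ω using Summable.add
  have hconv := ae_summable_and_tendsto_of_condExp_le_one_add_mul_sub (V := fun n => 1 + Y n)
    (fun n => stronglyMeasurable_one.add (hY n)) (fun n => (integrable_const 1).add (hY_int n))
    (fun n => (hY_nonneg n).mono fun ω => add_nonneg zero_le_one) hZ hZ_nonneg (hB.add hW)
    hBW_nonneg hsuper' hBW_sum
  filter_upwards [hconv, ae_all_iff.2 hY_nonneg] with ω ⟨hz, l, hl⟩ hy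
  have hlim : Tendsto (fun n => Y n ω) atTop (𝓝 (l - 1)) :=
    (hl.sub_const 1).congr fun n => add_sub_cancel_left 1 (Y n ω)
  exact ⟨hz, l - 1, ge_of_tendsto' hlim hy, hlim⟩

end AlmostSupermartingale

/-- **Supermartingale convergence (Robbins–Siegmund)**. Let `(Y_k)`, `(Z_k)`, `(W_k)` be
sequences of nonnegative integrable random variables adapted to a filtration `(𝔉_k)`,
with `E[Y_{k+1} | 𝔉_k] ≤ Y_k - Z_k + W_k` a.s. for every `k` and `∑_k W_k < ∞` a.s.
Then `∑_k Z_k < ∞` a.s. and `Y_k` converges a.s. to a nonnegative (random) limit. -/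
theorem robbins_siegmund_supermartingale_convergence
    {Ω : Type*} {m0 : MeasurableSpace Ω} (μ : Measure Ω) [IsProbabilityMeasure μ]
    (ℱ : Filtration ℕ m0)
    (Y Z W : ℕ → Ω → ℝ)
    (hYnonneg : ∀ k ω, 0 ≤ Y k ω) (hZnonneg : ∀ k ω, 0 ≤ Z k ω)
    (hWnonneg : ∀ k ω, 0 ≤ W k ω)
    (hYint : ∀ k, Integrable (Y k) μ) (hZint : ∀ k, Integrable (Z k) μ)
    (hWint : ∀ k, Integrable (W k) μ)
    (hYmeas : ∀ k, Measurable[ℱ k] (Y k))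
    (hZmeas : ∀ k, Measurable[ℱ k] (Z k))
    (hWmeas : ∀ k, Measurable[ℱ k] (W k))
    (hsuper : ∀ k, μ[Y (k + 1) | ℱ k] ≤ᵐ[μ] fun ω => Y k ω - Z k ω + W k ω)
    (hWsum : ∀ᵐ ω ∂μ, Summable (fun k => W k ω)) :
    ∀ᵐ ω ∂μ, Summable (fun k => Z k ω) ∧
      ∃ c : ℝ, 0 ≤ c ∧ Tendsto (fun k => Y k ω) atTop (𝓝 c) :=
  robbins_siegmund_supermartingale_convergence_general (B := 0)
    (Adapted.stronglyAdapted hYmeas) hYint (fun k => ae_of_all μ (hYnonneg k))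
    (Adapted.stronglyAdapted hZmeas) (fun k => ae_of_all μ (hZnonneg k))
    (fun _ => stronglyMeasurable_zero) (fun _ => .rfl)
    (Adapted.stronglyAdapted hWmeas) (fun k => ae_of_all μ (hWnonneg k))
    (by simpa using hsuper) (ae_of_all μ fun _ => summable_zero) hWsum
end

section
/- In the 3D LASSO example, for every x ∈ ℝ³ and every i ∈ {1,2,3}, one has ‖∇f_i(x) − ∇F(x)‖ ≥ ‖∇F(x)‖, where ‖·‖ is the Euclidean norm. In particular, the stochastic gradient error ∇f_i(x) − ∇F(x) does not vanish at any point where ∇F(x) ≠ 0. -/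
/-!
If vectors `g j` are pairwise orthogonal and `G = c • ∑ j, g j`, then `⟪g i, G⟫ = c * ‖g i‖ ^ 2`,
so `‖g i - G‖ ^ 2 - ‖G‖ ^ 2 = ‖g i‖ ^ 2 - 2 * ⟪g i, G⟫ = (1 - 2 * c) * ‖g i‖ ^ 2`, which is
nonnegative as soon as `c ≤ 1 / 2`. The gradient of `y ↦ (⟪k, y⟫ - b) ^ 2 / 2` is a multiple of `k`,
so orthogonal rows give orthogonal gradients, and an average of three terms has `c = 1 / 3`.
-/

open scoped RealInnerProductSpace

open scoped Gradient

section Norm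

variable {E : Type*} [NormedAddCommGroup E] [InnerProductSpace ℝ E]

theorem norm_le_norm_sub_iff_two_mul_inner_le {v w : E} :
    ‖w‖ ≤ ‖v - w‖ ↔ 2 * ⟪v, w⟫ ≤ ‖v‖ ^ 2 := by
  rw [← sq_le_sq₀ (norm_nonneg w) (norm_nonneg (v - w)), norm_sub_sq_real]
  constructor <;> intro h <;> linarith

variable {ι : Type*} [Fintype ι] {g : ι → E}

theorem inner_sum_eq_norm_sq_of_pairwise_orthogonal (hg : Pairwise fun i j => ⟪g i, g j⟫ = 0)
    (i : ι) : ⟪g i, ∑ j, g j⟫ = ‖g i‖ ^ 2 := by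
  rw [inner_sum, Fintype.sum_eq_single i fun j hj => hg hj.symm, real_inner_self_eq_norm_sq]

theorem norm_smul_sum_le_norm_sub_of_pairwise_orthogonal
    (hg : Pairwise fun i j => ⟪g i, g j⟫ = 0) {c : ℝ} (hc : c ≤ 1 / 2) (i : ι) :
    ‖c • ∑ j, g j‖ ≤ ‖g i - c • ∑ j, g j‖ := by
  rw [norm_le_norm_sub_iff_two_mul_inner_le, real_inner_smul_right,
    inner_sum_eq_norm_sq_of_pairwise_orthogonal hg, ← mul_assoc]
  exact mul_le_of_le_one_left (sq_nonneg _) (by linarith)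

end Norm

section Gradient

section RCLike

variable {𝕜 E : Type*} [RCLike 𝕜] [NormedAddCommGroup E] [InnerProductSpace 𝕜 E] [CompleteSpace E]

theorem gradient_fun_sum {ι : Type*} {s : Finset ι} {f : ι → E → 𝕜} {x : E}
    (hf : ∀ i ∈ s, DifferentiableAt 𝕜 (f i) x) :
    ∇ (fun y => ∑ i ∈ s, f i y) x = ∑ i ∈ s, ∇ (f i) x := by
  simp only [gradient, fderiv_fun_sum hf, map_sum]

theorem gradient_fun_const_mul (c : 𝕜) (f : E → 𝕜) (x : E) :
    ∇ (fun y => c * f y) x = starRingEnd 𝕜 c • ∇ f x := by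
  have hfderiv : fderiv 𝕜 (fun y => c * f y) x = c • fderiv 𝕜 f x :=
    congrFun (fderiv_const_smul_field c) x
  simp only [gradient, hfderiv, map_smulₛₗ]

end RCLike

variable {E : Type*} [NormedAddCommGroup E] [InnerProductSpace ℝ E] [CompleteSpace E]

theorem hasGradientAt_half_sq_inner_sub (k : E) (b : ℝ) (x : E) :
    HasGradientAt (fun y => (⟪k, y⟫ - b) ^ 2 / 2) ((⟪k, x⟫ - b) • k) x := by
  have hlin : HasFDerivAt (fun y => ⟪k, y⟫ - b) (innerSL ℝ k) x :=
    (innerSL ℝ k).hasFDerivAt.sub_const b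
  have hsq : HasDerivAt (fun t : ℝ => t ^ 2 / 2) (⟪k, x⟫ - b) (⟪k, x⟫ - b) := by
    simpa using (hasDerivAt_pow 2 (⟪k, x⟫ - b)).div_const 2
  rw [hasGradientAt_iff_hasFDerivAt]
  simpa only [map_smul] using! hsq.comp_hasFDerivAt x hlin

theorem norm_gradient_const_mul_sum_le_norm_gradient_sub {ι : Type*} [Fintype ι]
    {f : ι → E → ℝ} {x : E} (hf : ∀ i, DifferentiableAt ℝ (f i) x)
    (horth : Pairwise fun i j => ⟪∇ (f i) x, ∇ (f j) x⟫ = 0) {c : ℝ} (hc : c ≤ 1 / 2) (i : ι) :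
    ‖∇ (fun y => c * ∑ j, f j y) x‖ ≤ ‖∇ (f i) x - ∇ (fun y => c * ∑ j, f j y) x‖ := by
  have hgrad : ∇ (fun y => c * ∑ j, f j y) x = c • ∑ j, ∇ (f j) x := by
    rw [gradient_fun_const_mul, gradient_fun_sum fun j _ => hf j, conj_trivial]
  rw [hgrad]
  exact norm_smul_sum_le_norm_sub_of_pairwise_orthogonal horth hc i

end Gradient

theorem pairwise_inner_single_eq_zero {ι : Type*} [Fintype ι] [DecidableEq ι] (d : ι → ℝ) :
    Pairwise fun i j => ⟪EuclideanSpace.single i (d i), EuclideanSpace.single j (d j)⟫ = 0 := by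
  intro i j hij
  simp [EuclideanSpace.inner_single_left, hij]

theorem lasso3d_sgd_error_lower_bound_general {E ι : Type*} [NormedAddCommGroup E]
    [InnerProductSpace ℝ E] [CompleteSpace E] [Fintype ι]
    (K : ι → E) (hK : Pairwise fun i j => ⟪K i, K j⟫ = 0) (b : ι → ℝ)
    (f : ι → E → ℝ) (hf : ∀ i x, f i x = (⟪K i, x⟫ - b i) ^ 2 / 2)
    (c : ℝ) (hc : c ≤ 1 / 2) (F : E → ℝ) (hF : ∀ x, F x = c * ∑ i, f i x) (x : E) (i : ι) :
    ‖∇ (f i) x - ∇ F x‖ ≥ ‖∇ F x‖ ∧ (∇ F x ≠ 0 → ∇ (f i) x - ∇ F x ≠ 0) := by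
  obtain rfl := funext hF
  have hgrad (j : ι) : HasGradientAt (f j) ((⟪K j, x⟫ - b j) • K j) x := by
    simpa only [← hf] using hasGradientAt_half_sq_inner_sub (K j) (b j) x
  have horth : Pairwise fun i j => ⟪∇ (f i) x, ∇ (f j) x⟫ = 0 := fun i j hij => by
    simp only [(hgrad _).gradient, real_inner_smul_left, real_inner_smul_right, hK hij, mul_zero]
  have hle := norm_gradient_const_mul_sum_le_norm_gradient_sub
    (fun j => (hgrad j).differentiableAt) horth hc i
  exact ⟨hle, fun hne => norm_pos_iff.mp ((norm_pos_iff.mpr hne).trans_le hle)⟩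

/-- In the 3D LASSO example with `K = diag(1, √2, √3)`, `b = (2, √2/3, √3/4)`,
`fᵢ(x) = (⟨Kᵢ, x⟩ - bᵢ)²/2` and `F = (1/3)(f₁ + f₂ + f₃)`: for every `x` and every `i`,
`‖∇fᵢ(x) - ∇F(x)‖ ≥ ‖∇F(x)‖`; in particular the stochastic gradient error
`∇fᵢ(x) - ∇F(x)` does not vanish at any point where `∇F(x) ≠ 0`. -/
theorem lasso3d_sgd_error_lower_bound
    (Krow : Fin 3 → EuclideanSpace ℝ (Fin 3))
    (hK0 : Krow 0 = (WithLp.equiv 2 (Fin 3 → ℝ)).symm ![1, 0, 0])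
    (hK1 : Krow 1 = (WithLp.equiv 2 (Fin 3 → ℝ)).symm ![0, Real.sqrt 2, 0])
    (hK2 : Krow 2 = (WithLp.equiv 2 (Fin 3 → ℝ)).symm ![0, 0, Real.sqrt 3])
    (b : Fin 3 → ℝ) (hb : b = ![2, Real.sqrt 2 / 3, Real.sqrt 3 / 4])
    (f : Fin 3 → EuclideanSpace ℝ (Fin 3) → ℝ)
    (hf : ∀ i x, f i x = (⟪Krow i, x⟫ - b i) ^ 2 / 2)
    (F : EuclideanSpace ℝ (Fin 3) → ℝ)
    (hF : ∀ x, F x = (1 / 3 : ℝ) * ∑ i, f i x) :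
    ∀ (x : EuclideanSpace ℝ (Fin 3)) (i : Fin 3),
      ‖gradient (f i) x - gradient F x‖ ≥ ‖gradient F x‖ ∧
      (gradient F x ≠ 0 → gradient (f i) x - gradient F x ≠ 0) := by
  have hK : Krow = fun i => EuclideanSpace.single i (![1, Real.sqrt 2, Real.sqrt 3] i) := by
    ext i j
    fin_cases i <;> fin_cases j <;> simp [hK0, hK1, hK2]
  exact lasso3d_sgd_error_lower_bound_general Krow (hK ▸ pairwise_inner_single_eq_zero _) b f hf
    (1 / 3) (by norm_num) F hF
end

section
/- In the 3D LASSO example, let x₀ = (μ, 0, 0) with μ ∈ ℝ, let γ > 0, and for i ∈ {2, 3} let x₁ := prox_{γ·(1/3)‖·‖₁}(x₀ − γ∇f_i(x₀)) be the Prox-SGD update when index i is sampled. If |μ| > γ, then x₁ has exactly two nonzero coordinates (coordinates 1 and i); in particular x₁ does not belong to the line {(t, 0, 0) : t ∈ ℝ} containing the minimizer (1, 0, 0). -/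
open scoped RealInnerProductSpace

/-!
Both the `ℓ¹` norm and the squared distance are sums over coordinates, so the proximal step acts
coordinatewise, and it keeps a coordinate nonzero exactly when the forward step puts that
coordinate above the threshold in absolute value. Since row `i` of `K` is a multiple of the `i`-th
basis vector, the forward step from `x₀` moves only coordinate `i`, from `0` to `γ * (Kᵢᵢ * bᵢ)`.
The example is tuned so that `Kᵢᵢ * bᵢ` is `2/3` or `3/4`, in both cases above the `ℓ¹` weight
`1/3`: whatever `μ` is, the step activates coordinate `i`.
-/

section Separable

variable {ι M : Type*} {α : ι → Type*} [Fintype ι]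
  [AddCommMonoid M] [LinearOrder M] [IsOrderedCancelAddMonoid M]

lemma isMinOn_univ_apply_of_isMinOn_univ_sum {φ : ∀ i, α i → M} {x : ∀ i, α i}
    (hx : IsMinOn (fun y : ∀ i, α i => ∑ i, φ i (y i)) Set.univ x) (i : ι) :
    IsMinOn (φ i) Set.univ (x i) := by
  classical
  refine isMinOn_univ_iff.2 fun t => le_of_not_gt fun hlt => ?_
  have hle : ∀ j, φ j (Function.update x i t j) ≤ φ j (x j) :=
    (Function.forall_update_iff x fun j s => φ j s ≤ φ j (x j)).2 ⟨hlt.le, fun _ _ => le_rfl⟩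
  refine (isMinOn_univ_iff.1 hx (Function.update x i t)).not_gt ?_
  exact Finset.sum_lt_sum (fun j _ => hle j)
    ⟨i, Finset.mem_univ i, by rwa [Function.update_self]⟩

end Separable

section AbsProx

variable {l z a : ℝ}

lemma ne_zero_of_isMinOn_abs_prox
    (ha : IsMinOn (fun t : ℝ => l * |t| + (t - z) ^ 2 / 2) Set.univ a) (hz : l < |z|) :
    a ≠ 0 := by
  rintro rfl
  have hmin := isMinOn_univ_iff.1 ha
  simp only [abs_zero] at hmin
  -- The soft-thresholded point `z ∓ l` beats `0` by `(|z| - l) ^ 2 / 2`.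
  rcases lt_abs.1 hz with hpos | hneg
  · have hle := hmin (z - l)
    rw [abs_of_pos (sub_pos.2 hpos)] at hle
    nlinarith [pow_pos (sub_pos.2 hpos) 2]
  · have hle := hmin (z + l)
    rw [abs_of_neg (by linarith)] at hle
    nlinarith [pow_pos (sub_pos.2 hneg) 2]

lemma eq_zero_of_isMinOn_abs_prox
    (ha : IsMinOn (fun t : ℝ => l * |t| + (t - z) ^ 2 / 2) Set.univ a) (hz : |z| ≤ l) :
    a = 0 := by
  have hle := isMinOn_univ_iff.1 ha 0
  simp only [abs_zero] at hle
  have haz : a * z ≤ l * |a| := calc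
    a * z ≤ |a| * |z| := (le_abs_self _).trans_eq (abs_mul a z)
    _ ≤ |a| * l := by gcongr
    _ = l * |a| := mul_comm _ _
  exact pow_eq_zero_iff two_ne_zero |>.1 (le_antisymm (by linarith) (sq_nonneg a))

end AbsProx

section EuclideanSpace

variable {ι : Type*} [Fintype ι]

lemma l1_prox_objective_eq_sum (l : ℝ) (y z : EuclideanSpace ℝ ι) :
    l * ∑ j, |y j| + ‖y - z‖ ^ 2 / 2 = ∑ j, (l * |y j| + (y j - z j) ^ 2 / 2) := by
  simp only [EuclideanSpace.norm_sq_eq, PiLp.sub_apply, Real.norm_eq_abs, sq_abs,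
    Finset.mul_sum, Finset.sum_div, Finset.sum_add_distrib]

theorem l1_prox_apply_ne_zero_iff {l : ℝ} {z x : EuclideanSpace ℝ ι}
    (hx : IsMinOn (fun y => l * ∑ j, |y j| + ‖y - z‖ ^ 2 / 2) Set.univ x) (j : ι) :
    x j ≠ 0 ↔ l < |z j| := by
  simp only [l1_prox_objective_eq_sum] at hx
  have hxj : IsMinOn (fun t : ℝ => l * |t| + (t - z j) ^ 2 / 2) Set.univ (x j) :=
    isMinOn_univ_apply_of_isMinOn_univ_sum (φ := fun j t => l * |t| + (t - z j) ^ 2 / 2)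
      (isMinOn_univ_iff.2 fun y => isMinOn_univ_iff.1 hx (WithLp.toLp 2 y)) j
  exact ⟨fun hne => lt_of_not_ge fun hle => hne (eq_zero_of_isMinOn_abs_prox hxj hle),
    ne_zero_of_isMinOn_abs_prox hxj⟩

end EuclideanSpace

lemma hasGradientAt_half_sq_residual {E : Type*} [NormedAddCommGroup E] [InnerProductSpace ℝ E]
    [CompleteSpace E] (k : E) (c : ℝ) (x : E) :
    HasGradientAt (fun y : E => (⟪k, y⟫ - c) ^ 2 / 2) ((⟪k, x⟫ - c) • k) x := by
  have hres : HasFDerivAt (fun y : E => ⟪k, y⟫ - c) (innerSL ℝ k) x :=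
    (innerSL ℝ k).hasFDerivAt.sub_const c
  have hsq := (hres.pow 2).mul_const (2⁻¹ : ℝ)
  simp only [← div_eq_mul_inv] at hsq
  rw [hasGradientAt_iff_hasFDerivAt]
  refine hsq.congr_fderiv ?_
  ext y
  suffices 2⁻¹ * (2 * (⟪k, x⟫ - c) * ⟪k, y⟫) = (⟪k, x⟫ - c) * ⟪k, y⟫ by
    simpa [inner_smul_left] using this
  ring

lemma sub_smul_gradient_half_sq_residual_single {ι : Type*} [Fintype ι] [DecidableEq ι]
    (i : ι) (k c γ : ℝ) (x : EuclideanSpace ℝ ι) :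
    x - γ • gradient (fun y => (⟪EuclideanSpace.single i k, y⟫ - c) ^ 2 / 2) x =
      WithLp.toLp 2 (Function.update x.ofLp i (x i - γ * ((k * x i - c) * k))) := by
  rw [(hasGradientAt_half_sq_residual _ c x).gradient]
  ext j
  rcases eq_or_ne j i with rfl | hj
  · simp [EuclideanSpace.inner_single_left]
  · simp [hj]

theorem diagonal_lasso_prox_sgd_apply_ne_zero_iff {ι : Type*} [Fintype ι] [DecidableEq ι]
    {i : ι} {k c γ l : ℝ} {x₀ x₁ : EuclideanSpace ℝ ι}
    (hx₁ : IsMinOn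
      (fun y => l * ∑ j, |y j| + ‖y - (x₀ - γ • gradient
        (fun x => (⟪EuclideanSpace.single i k, x⟫ - c) ^ 2 / 2) x₀)‖ ^ 2 / 2)
      Set.univ x₁) (j : ι) :
    x₁ j ≠ 0 ↔ l < |Function.update x₀.ofLp i (x₀ i - γ * ((k * x₀ i - c) * k)) j| := by
  rw [sub_smul_gradient_half_sq_residual_single] at hx₁
  exact l1_prox_apply_ne_zero_iff hx₁ j

lemma exists_lasso3d_row_eq_single {Krow : Fin 3 → EuclideanSpace ℝ (Fin 3)}
    (hK1 : Krow 1 = (WithLp.equiv 2 (Fin 3 → ℝ)).symm ![0, Real.sqrt 2, 0])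
    (hK2 : Krow 2 = (WithLp.equiv 2 (Fin 3 → ℝ)).symm ![0, 0, Real.sqrt 3])
    {b : Fin 3 → ℝ} (hb : b = ![2, Real.sqrt 2 / 3, Real.sqrt 3 / 4])
    {i : Fin 3} (hi : i = 1 ∨ i = 2) :
    ∃ k, Krow i = EuclideanSpace.single i k ∧ 1 / 3 < k * b i := by
  rcases hi with rfl | rfl
  · refine ⟨√2, ?_, ?_⟩
    · ext j; fin_cases j <;> simp [hK1]
    · calc (1 / 3 : ℝ) < √2 * √2 / 3 := by norm_num
        _ = √2 * b 1 := by simp [hb, ← mul_div_assoc]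
  · refine ⟨√3, ?_, ?_⟩
    · ext j; fin_cases j <;> simp [hK2]
    · calc (1 / 3 : ℝ) < √3 * √3 / 4 := by norm_num
        _ = √3 * b 2 := by simp [hb, ← mul_div_assoc]

theorem lasso3d_prox_sgd_leaves_support_general
    (Krow : Fin 3 → EuclideanSpace ℝ (Fin 3))
    (hK1 : Krow 1 = (WithLp.equiv 2 (Fin 3 → ℝ)).symm ![0, Real.sqrt 2, 0])
    (hK2 : Krow 2 = (WithLp.equiv 2 (Fin 3 → ℝ)).symm ![0, 0, Real.sqrt 3])
    (b : Fin 3 → ℝ) (hb : b = ![2, Real.sqrt 2 / 3, Real.sqrt 3 / 4])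
    (f : Fin 3 → EuclideanSpace ℝ (Fin 3) → ℝ)
    (hf : ∀ i x, f i x = (⟪Krow i, x⟫ - b i) ^ 2 / 2)
    (μ : ℝ) (x0 : EuclideanSpace ℝ (Fin 3))
    (hx0 : x0 = (WithLp.equiv 2 (Fin 3 → ℝ)).symm ![μ, 0, 0])
    (γ : ℝ) (hγ : 0 < γ)
    (i : Fin 3) (hi : i = 1 ∨ i = 2)
    (x1 : EuclideanSpace ℝ (Fin 3))
    (hx1 : IsMinOn
      (fun y => γ / 3 * ∑ j, |y j| + ‖y - (x0 - γ • gradient (f i) x0)‖ ^ 2 / 2)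
      Set.univ x1) :
    (x1 0 ≠ 0 ↔ γ / 3 < |μ|) ∧ x1 i ≠ 0 ∧ (∀ j : Fin 3, j ≠ 0 → j ≠ i → x1 j = 0) ∧
    ∀ t : ℝ, x1 ≠ (WithLp.equiv 2 (Fin 3 → ℝ)).symm ![t, 0, 0] := by
  have hline : ∀ t : ℝ, ∀ j ≠ 0, (WithLp.equiv 2 (Fin 3 → ℝ)).symm ![t, 0, 0] j = 0 := by
    intro t j hj
    fin_cases j <;> simp_all
  have hi0 : i ≠ 0 := by rcases hi with rfl | rfl <;> decide
  obtain ⟨k, hrow, hkb⟩ := exists_lasso3d_row_eq_single hK1 hK2 hb hi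
  rw [funext (hf i), hrow] at hx1
  have hsupp := diagonal_lasso_prox_sgd_apply_ne_zero_iff hx1
  have hx0i : x0 i = 0 := hx0 ▸ hline μ i hi0
  have hactive : x1 i ≠ 0 := by
    refine (hsupp i).2 (lt_abs.2 (Or.inl ?_))
    rw [Function.update_self, hx0i]
    linarith [mul_lt_mul_of_pos_left hkb hγ]
  have hinactive : ∀ j ≠ i, (x1 j ≠ 0 ↔ γ / 3 < |x0 j|) := fun j hj => by
    simpa only [Function.update_of_ne hj] using hsupp j
  refine ⟨by simpa [hx0] using hinactive 0 hi0.symm, hactive, fun j hj0 hji => ?_,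
    fun t ht => hactive (ht ▸ hline t i hi0)⟩
  by_contra hne
  have hneg := (hinactive j hji).1 hne
  rw [hx0, hline μ j hj0, abs_zero] at hneg
  linarith

/-- In the 3D LASSO example: starting Prox-SGD at `x₀ = (μ, 0, 0)` with step-size `γ > 0`
and sampling index `i ∈ {2, 3}` (here 0-indexed as `i = 1` or `i = 2`), if `|μ| > γ` then
`x₁ = prox_{(γ/3)‖·‖₁}(x₀ - γ∇fᵢ(x₀))` has exactly two nonzero coordinates (the first
coordinate and coordinate `i`); in particular `x₁` does not lie on the line
`{(t,0,0) : t ∈ ℝ}` containing the minimizer `(1,0,0)`. -/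
theorem lasso3d_prox_sgd_leaves_support
    (Krow : Fin 3 → EuclideanSpace ℝ (Fin 3))
    (hK0 : Krow 0 = (WithLp.equiv 2 (Fin 3 → ℝ)).symm ![1, 0, 0])
    (hK1 : Krow 1 = (WithLp.equiv 2 (Fin 3 → ℝ)).symm ![0, Real.sqrt 2, 0])
    (hK2 : Krow 2 = (WithLp.equiv 2 (Fin 3 → ℝ)).symm ![0, 0, Real.sqrt 3])
    (b : Fin 3 → ℝ) (hb : b = ![2, Real.sqrt 2 / 3, Real.sqrt 3 / 4])
    (f : Fin 3 → EuclideanSpace ℝ (Fin 3) → ℝ)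
    (hf : ∀ i x, f i x = (⟪Krow i, x⟫ - b i) ^ 2 / 2)
    (μ : ℝ) (x0 : EuclideanSpace ℝ (Fin 3))
    (hx0 : x0 = (WithLp.equiv 2 (Fin 3 → ℝ)).symm ![μ, 0, 0])
    (γ : ℝ) (hγ : 0 < γ)
    (i : Fin 3) (hi : i = 1 ∨ i = 2)
    (x1 : EuclideanSpace ℝ (Fin 3))
    (hx1 : IsMinOn
      (fun y => γ / 3 * ∑ j, |y j| + ‖y - (x0 - γ • gradient (f i) x0)‖ ^ 2 / 2)
      Set.univ x1)
    (hμγ : γ < |μ|) :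
    x1 0 ≠ 0 ∧ x1 i ≠ 0 ∧ (∀ j : Fin 3, j ≠ 0 → j ≠ i → x1 j = 0) ∧
    ∀ t : ℝ, x1 ≠ (WithLp.equiv 2 (Fin 3 → ℝ)).symm ![t, 0, 0] := by
  exact (lasso3d_prox_sgd_leaves_support_general Krow hK1 hK2 b hb f hf μ x0 hx0 γ hγ i hi x1
    hx1).imp_left fun hfirst => hfirst.2 (by linarith)
end
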